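/- (Simplest case with best constant.) Let $p > 1$, $1/p+1/q = 1$, $\rho > \max\{0,-\alpha\}$, $0 < \gamma < \sigma \le 1$, and $f, a_n \ge 0$ with $0 < \int_0^{\infty} x^{p(1-\sigma)-1}f^p(x)dx < \infty$ and $0 < \sum_{n\ge1} n^{q(1-\sigma)-1}a_n^q < \infty$. Then $\sum_{n=1}^{\infty}\int_0^{\infty} \frac{\operatorname{csch}(\rho (xn)^{\gamma})}{e^{\alpha (xn)^{\gamma}}} a_n f(x)\,dx < k(\sigma)\left[\int_0^{\infty} x^{p(1-\sigma)-1}f^p(x)\,dx\right]^{1/p}\left[\sum_{n=1}^{\infty} n^{q(1-\sigma)-1}a_n^q\right]^{1/q}$, where $k(\sigma) = \frac{2\Gamma(\sigma/\gamma)}{\gamma(2\rho)^{\sigma/\gamma}}\zeta(\frac{\sigma}{\gamma},\frac{\alpha+\rho}{2\rho})$ is the best possible constant. -/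

import Mathlib

/-- The hyperbolic cosecant function. -/
noncomputable def csch (u : ℝ) : ℝ := 2 / (Real.exp u - Real.exp (-u))

/-- The Hurwitz zeta function (real, as a series), for Re s > 1, a > 0. -/
noncomputable def hurwitzZetaReal (s a : ℝ) : ℝ := ∑' k : ℕ, ((k : ℝ) + a) ^ (-s)

open MeasureTheory Set Filter Topology

noncomputable def Hk (α ρ γ u : ℝ) : ℝ := csch (ρ * u ^ γ) / Real.exp (α * u ^ γ)

lemma Hk_meas (α ρ γ : ℝ) : Measurable (Hk α ρ γ) := by
  unfold Hk csch
  fun_prop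

lemma Hk_base {α ρ t : ℝ} :
    csch (ρ * t) / Real.exp (α * t) = 2 * Real.exp (-(α + ρ) * t) * (1 - Real.exp (-(2 * ρ * t)))⁻¹ := by
  unfold csch
  have e1 : Real.exp (-(2 * ρ * t)) = Real.exp (-(ρ*t)) * Real.exp (-(ρ*t)) := by
    rw [← Real.exp_add]; congr 1; ring
  have e2 : Real.exp (-(α + ρ) * t) = Real.exp (-(ρ*t)) / Real.exp (α * t) := by
    rw [← Real.exp_sub]; congr 1; ring
  have e3 : Real.exp (ρ * t) = (Real.exp (-(ρ*t)))⁻¹ := by rw [← Real.exp_neg, neg_neg]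
  rw [e1, e2, e3]
  have h0 := Real.exp_pos (-(ρ*t))
  generalize Real.exp (-(ρ*t)) = z at *
  rw [show z⁻¹ - z = (1 - z * z) / z by field_simp]
  rw [div_div_eq_mul_div]
  ring

lemma Hk_hasSum {α ρ γ u : ℝ} (hρ : 0 < ρ) (hu : 0 < u) :
    HasSum (fun k : ℕ => 2 * Real.exp (-(2 * ρ * (k + (α + ρ) / (2 * ρ))) * u ^ γ)) (Hk α ρ γ u) := by
  have ht : 0 < u ^ γ := Real.rpow_pos_of_pos hu γ
  unfold Hk
  rw [Hk_base]
  generalize u ^ γ = t at *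
  have h := (hasSum_geometric_of_lt_one (Real.exp_pos (-(2 * ρ * t))).le
    (by rw [Real.exp_lt_one_iff]; have := mul_pos hρ ht; nlinarith)).mul_left (2 * Real.exp (-(α + ρ) * t))
  suffices e : (fun k : ℕ => 2 * Real.exp (-(2 * ρ * (k + (α + ρ) / (2 * ρ))) * t)) =
      fun i : ℕ => 2 * Real.exp (-(α + ρ) * t) * Real.exp (-(2 * ρ * t)) ^ i by
    rw [e]; exact h
  funext k
  rw [← Real.exp_nat_mul, mul_assoc 2 (Real.exp _), ← Real.exp_add]
  congr 2
  field_simp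
  ring

lemma Hk_pos {α ρ γ u : ℝ} (hρ : 0 < ρ) (hu : 0 < u) : 0 < Hk α ρ γ u := by
  have ht : 0 < u ^ γ := Real.rpow_pos_of_pos hu γ
  unfold Hk
  rw [Hk_base]
  have : Real.exp (-(2 * ρ * u ^ γ)) < 1 := by
    rw [Real.exp_lt_one_iff]; have := mul_pos hρ ht; nlinarith
  have : 0 < 1 - Real.exp (-(2 * ρ * u ^ γ)) := by linarith
  positivity

lemma Hk_anti {α ρ γ u v : ℝ} (hρ : 0 < ρ) (hα : 0 < α + ρ) (hγ : 0 < γ) (hu : 0 < u) (huv : u < v) :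
    Hk α ρ γ v < Hk α ρ γ u := by
  have ht : 0 < u ^ γ := Real.rpow_pos_of_pos hu γ
  have hlt : u ^ γ < v ^ γ := Real.rpow_lt_rpow hu.le huv hγ
  unfold Hk
  rw [Hk_base, Hk_base]
  generalize u ^ γ = s at *
  generalize v ^ γ = t at *
  have h1 : Real.exp (-(2 * ρ * s)) < 1 := by
    rw [Real.exp_lt_one_iff]; have := mul_pos hρ ht; nlinarith
  have h2 : Real.exp (-(2 * ρ * t)) < Real.exp (-(2 * ρ * s)) := by
    rw [Real.exp_lt_exp]; nlinarith
  have h3 : Real.exp (-(α + ρ) * t) < Real.exp (-(α + ρ) * s) := by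
    rw [Real.exp_lt_exp]; nlinarith
  apply mul_lt_mul
  · linarith
  · apply inv_anti₀ <;> linarith
  · apply inv_pos.2; linarith
  · positivity

lemma Hk_lint {α ρ γ σ : ℝ} (hρ : 0 < ρ) (hα : 0 < α + ρ) (hγ : 0 < γ) (hγσ : γ < σ) :
    ∫⁻ u in Ioi (0:ℝ), ENNReal.ofReal (u ^ (σ - 1) * Hk α ρ γ u) =
      ENNReal.ofReal (2 * Real.Gamma (σ / γ) / (γ * (2 * ρ) ^ (σ / γ)) *
        hurwitzZetaReal (σ / γ) ((α + ρ) / (2 * ρ))) := by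
  have hb : ∀ k : ℕ, 0 < (k + (α + ρ) / (2 * ρ)) := fun k => by positivity
  have h1 : ∫⁻ u in Ioi (0:ℝ), ENNReal.ofReal (u ^ (σ - 1) * Hk α ρ γ u) =
      ∫⁻ u in Ioi (0:ℝ), ∑' k : ℕ, ENNReal.ofReal (2 * (u ^ (σ - 1) *
        Real.exp (-(2 * ρ * (k + (α + ρ) / (2 * ρ))) * u ^ γ))) := by
    apply setLIntegral_congr_fun measurableSet_Ioi
    intro u hu
    have hu : 0 < u := hu
    have h := (Hk_hasSum (α := α) (γ := γ) hρ hu).mul_left (u ^ (σ - 1))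
    simp only
    rw [← h.tsum_eq, ENNReal.ofReal_tsum_of_nonneg _ h.summable]
    · congr! 3; ring
    · intro n; positivity
  rw [h1, lintegral_tsum]
  · have hG : 0 < Real.Gamma (σ / γ) := Real.Gamma_pos_of_pos (by have := hγ.trans hγσ; positivity)
    unfold hurwitzZetaReal
    rw [← tsum_mul_left, ENNReal.ofReal_tsum_of_nonneg]
    · congr! 2 with k
      rw [← ofReal_integral_eq_lintegral_ofReal]
      · rw [integral_const_mul, integral_rpow_mul_exp_neg_mul_rpow hγ (by linarith) (by have := hb k; positivity)]
        congr 1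
        rw [Real.mul_rpow (by positivity) (hb k).le]
        simp only [sub_add_cancel]
        rw [neg_div, Real.rpow_neg (by positivity : 0 ≤ 2 * ρ)]
        field_simp
      · exact (integrableOn_rpow_mul_exp_neg_mul_rpow (by linarith) hγ (by have := hb k; positivity)).const_mul 2
      · filter_upwards [ae_restrict_mem measurableSet_Ioi] with u hu
        have hu : 0 < u := hu
        simp only [Pi.zero_apply]
        positivity
    · intro k; have := hb k; positivity
    · apply Summable.mul_left
      have := (Real.summable_one_div_nat_add_rpow ((α + ρ) / (2 * ρ)) (σ / γ)).2 (by rwa [one_lt_div hγ])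
      refine this.congr fun k => ?_
      rw [abs_of_pos (hb k), Real.rpow_neg (hb k).le, one_div]
  · intro k; fun_prop

lemma lint_scale {c : ℝ} (hc : 0 < c) (g : ℝ → ENNReal) :
    ∫⁻ x in Ioi (0:ℝ), g x = ENNReal.ofReal c * ∫⁻ x in Ioi (0:ℝ), g (c * x) := by
  have h := lintegral_image_eq_lintegral_abs_deriv_mul (s := Ioi (0:ℝ)) (f := fun x => c * x) (f' := fun _ => c)
    measurableSet_Ioi (fun x _ => by simpa using ((hasDerivAt_id x).const_mul c).hasDerivWithinAt)
    (fun x _ y _ hxy => mul_left_cancel₀ hc.ne' hxy) g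
  have himg : (fun x => c * x) '' Ioi (0:ℝ) = Ioi 0 := by
    simpa using image_mul_left_Ioi hc (0:ℝ)
  rw [himg] at h
  rw [h, lintegral_const_mul' _ _ ENNReal.ofReal_ne_top, abs_of_pos hc]

/-- scaled weight -/
lemma Hk_lint_scale {α ρ γ σ k c : ℝ}
    (hI : ∫⁻ u in Ioi (0:ℝ), ENNReal.ofReal (u ^ (σ - 1) * Hk α ρ γ u) = ENNReal.ofReal k)
    (hc : 0 < c) :
    ∫⁻ u in Ioi (0:ℝ), ENNReal.ofReal (u ^ (σ - 1) * Hk α ρ γ (c * u)) = ENNReal.ofReal (c ^ (-σ) * k) := by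
  rw [ENNReal.ofReal_mul (by positivity), ← hI, lint_scale hc (fun u => ENNReal.ofReal (u ^ (σ - 1) * Hk α ρ γ u)), ← mul_assoc,
    ← ENNReal.ofReal_mul (by positivity), ← lintegral_const_mul' _ _ ENNReal.ofReal_ne_top]
  apply setLIntegral_congr_fun measurableSet_Ioi
  intro u hu
  have hu : 0 < u := hu
  simp only
  rw [← ENNReal.ofReal_mul (by positivity)]
  congr 1
  rw [Real.mul_rpow hc.le hu.le]
  have : c ^ (-σ) * c * c ^ (σ - 1) = 1 := by
    nth_rewrite 2 [← Real.rpow_one c]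
    rw [← Real.rpow_add hc, ← Real.rpow_add hc]; simp
  linear_combination (-(u ^ (σ - 1) * Hk α ρ γ (c * u))) * this

lemma lint_decomp (g : ℝ → ENNReal) :
    ∫⁻ x in Ioi (0:ℝ), g x = ∑' n : ℕ, ∫⁻ x in Ioo (n:ℝ) (n+1), g x := by
  have : Ioi (0:ℝ) = ⋃ n : ℕ, Ioc (n:ℝ) (n+1) := by
    ext x
    simp only [mem_Ioi, mem_iUnion, mem_Ioc]
    constructor
    · intro hx
      refine ⟨⌈x⌉₊ - 1, ?_⟩
      have h1 : 1 ≤ ⌈x⌉₊ := Nat.one_le_ceil_iff.2 hx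
      push_cast [h1]
      have := Nat.ceil_lt_add_one hx.le
      have := Nat.le_ceil x
      constructor <;> linarith
    · rintro ⟨n, hn, -⟩
      exact lt_of_le_of_lt (Nat.cast_nonneg n) hn
  rw [this, lintegral_iUnion (fun _ => measurableSet_Ioc)]
  · congr! 2 with n
    rw [Measure.restrict_congr_set (Ioo_ae_eq_Ioc (μ := volume) (a := (n:ℝ)) (b := n+1)).symm]
  · intro i j hij
    rcases lt_or_gt_of_ne hij with h | h
    · have : (i:ℝ) + 1 ≤ j := by exact_mod_cast h
      exact Set.disjoint_left.2 fun x hx hy => by linarith [hx.2, hy.1]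
    · have : (j:ℝ) + 1 ≤ i := by exact_mod_cast h
      exact Set.disjoint_left.2 fun x hx hy => by linarith [hx.1, hy.2]

lemma sum_lt {α ρ γ σ k c : ℝ} (hρ : 0 < ρ) (hα : 0 < α + ρ) (hγ : 0 < γ) (hσ : σ ≤ 1)
    (hI : ∫⁻ u in Ioi (0:ℝ), ENNReal.ofReal (u ^ (σ - 1) * Hk α ρ γ u) = ENNReal.ofReal k)
    (hc : 0 < c) :
    ∑' n : ℕ, ENNReal.ofReal (((n:ℝ)+1) ^ (σ - 1) * Hk α ρ γ (c * (n+1))) < ENNReal.ofReal (c ^ (-σ) * k) := by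
  have key : ∀ n : ℕ, ENNReal.ofReal (((n:ℝ)+1) ^ (σ - 1) * Hk α ρ γ (c * (n+1))) <
      ∫⁻ u in Ioo (n:ℝ) (n+1), ENNReal.ofReal (u ^ (σ - 1) * Hk α ρ γ (c * u)) := by
    intro n
    have h1 : ∫⁻ u in Ioo (n:ℝ) (n+1), ENNReal.ofReal (((n:ℝ)+1) ^ (σ - 1) * Hk α ρ γ (c * (n+1))) =
      ENNReal.ofReal (((n:ℝ)+1) ^ (σ - 1) * Hk α ρ γ (c * (n+1))) := by simp
    rw [← h1]
    apply lintegral_strict_mono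
    · simp
    · have := Hk_meas α ρ γ
      fun_prop
    · rw [h1]; exact ENNReal.ofReal_ne_top
    · filter_upwards [ae_restrict_mem measurableSet_Ioo] with u hu
      have hu0 : 0 < u := lt_of_le_of_lt (Nat.cast_nonneg n) hu.1
      have hH := Hk_pos (α := α) (γ := γ) hρ (mul_pos hc hu0)
      apply (ENNReal.ofReal_lt_ofReal_iff (by positivity)).2
      apply mul_lt_mul'
      · exact Real.rpow_le_rpow_of_nonpos hu0 hu.2.le (by linarith)
      · exact Hk_anti hρ hα hγ (by positivity) (by have := hu.2; gcongr)
      · exact (Hk_pos hρ (by positivity)).le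
      · positivity
  rw [← Hk_lint_scale hI hc, lint_decomp]
  apply ENNReal.tsum_lt_tsum (i := 0) _ (fun n => (key n).le) (key 0)
  apply ne_top_of_le_ne_top _ (ENNReal.tsum_le_tsum (fun n => (key n).le))
  rw [← lint_decomp, Hk_lint_scale hI hc]
  exact ENNReal.ofReal_ne_top

lemma holder_sum {p q : ℝ} (hpq : p.HolderConjugate q) (F G : ℕ → ℝ → ENNReal) (μ : Measure ℝ)
    (hF : ∀ n, AEMeasurable (F n) μ) (hG : ∀ n, AEMeasurable (G n) μ) :
    ∑' n, ∫⁻ x, F n x * G n x ∂μ ≤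
      (∑' n, ∫⁻ x, F n x ^ p ∂μ) ^ (1/p) * (∑' n, ∫⁻ x, G n x ^ q ∂μ) ^ (1/q) := by
  have hp := hpq.pos
  have hq := hpq.symm.pos
  have h1 : ∀ n, ∫⁻ x, F n x * G n x ∂μ ≤ (∫⁻ x, F n x ^ p ∂μ) ^ (1/p) * (∫⁻ x, G n x ^ q ∂μ) ^ (1/q) :=
    fun n => ENNReal.lintegral_mul_le_Lp_mul_Lq μ hpq (hF n) (hG n)
  refine (ENNReal.tsum_le_tsum h1).trans ?_
  have h2 := ENNReal.lintegral_mul_le_Lp_mul_Lq (Measure.count : Measure ℕ) hpq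
    (f := fun n => (∫⁻ x, F n x ^ p ∂μ) ^ (1/p)) (g := fun n => (∫⁻ x, G n x ^ q ∂μ) ^ (1/q))
    (measurable_of_countable _).aemeasurable (measurable_of_countable _).aemeasurable
  simp only [lintegral_count, Pi.mul_apply] at h2
  simp only [← ENNReal.rpow_mul, one_div_mul_cancel hp.ne', one_div_mul_cancel hq.ne', ENNReal.rpow_one] at h2
  exact h2

lemma part1 {α ρ γ σ p q k : ℝ} (hρ : 0 < ρ) (hα : 0 < α + ρ) (hγ : 0 < γ) (hσ : σ ≤ 1)
    (hpq : p.HolderConjugate q)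
    (hI : ∫⁻ u in Ioi (0:ℝ), ENNReal.ofReal (u ^ (σ - 1) * Hk α ρ γ u) = ENNReal.ofReal k)
    (f : ℝ → ℝ) (a : ℕ → ℝ) (hf : ∀ x, 0 ≤ f x) (ha : ∀ n, 0 ≤ a n)
    (hA : 0 < ∫ x in Ioi (0 : ℝ), x ^ (p * (1 - σ) - 1) * f x ^ p)
    (hAi : IntegrableOn (fun x => x ^ (p * (1 - σ) - 1) * f x ^ p) (Ioi 0))
    (hB : 0 < ∑' n : ℕ, ((n : ℝ) + 1) ^ (q * (1 - σ) - 1) * a (n + 1) ^ q)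
    (hBs : Summable fun n : ℕ => ((n : ℝ) + 1) ^ (q * (1 - σ) - 1) * a (n + 1) ^ q) :
    ENNReal.ofReal (∑' n : ℕ, ∫ x in Ioi (0 : ℝ), Hk α ρ γ (x * ((n : ℝ) + 1)) * (a (n + 1) * f x)) =
      ∑' n : ℕ, ∫⁻ x in Ioi (0 : ℝ), ENNReal.ofReal (Hk α ρ γ (x * ((n : ℝ) + 1)) * (a (n + 1) * f x)) ∧
    (∑' n : ℕ, ∫ x in Ioi (0 : ℝ), Hk α ρ γ (x * ((n : ℝ) + 1)) * (a (n + 1) * f x)) <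
        k * ((∫ x in Ioi (0 : ℝ), x ^ (p * (1 - σ) - 1) * f x ^ p) ^ (1 / p) *
          (∑' n : ℕ, ((n : ℝ) + 1) ^ (q * (1 - σ) - 1) * a (n + 1) ^ q) ^ (1 / q)) := by
  have hp := hpq.pos
  have hq := hpq.symm.pos
  have hHm := Hk_meas α ρ γ
  have hk : 0 < k := by
    have := sum_lt hρ hα hγ hσ hI one_pos
    simpa using pos_of_gt this
  have hfm : AEMeasurable f (volume.restrict (Ioi 0)) := by
    have h1 : AEMeasurable (fun x => (x ^ (-(p * (1 - σ) - 1)) * (x ^ (p * (1 - σ) - 1) * f x ^ p)) ^ (1/p))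
        (volume.restrict (Ioi (0:ℝ))) := by
      have := hAi.aestronglyMeasurable.aemeasurable
      refine AEMeasurable.pow_const (AEMeasurable.mul ?_ this) _
      fun_prop
    refine h1.congr ?_
    filter_upwards [ae_restrict_mem measurableSet_Ioi] with x hx
    have hx : 0 < x := hx
    rw [← mul_assoc, ← Real.rpow_add hx, neg_add_cancel, Real.rpow_zero, one_mul,
      ← Real.rpow_mul (hf x), mul_one_div_cancel hp.ne', Real.rpow_one]
  set A := ∫ x in Ioi (0 : ℝ), x ^ (p * (1 - σ) - 1) * f x ^ p with hAdef
  set B := ∑' n : ℕ, ((n : ℝ) + 1) ^ (q * (1 - σ) - 1) * a (n + 1) ^ q with hBdef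
  have hA' : ENNReal.ofReal A = ∫⁻ x in Ioi (0:ℝ), ENNReal.ofReal (x ^ (p * (1 - σ) - 1) * f x ^ p) := by
    apply ofReal_integral_eq_lintegral_ofReal hAi
    filter_upwards [ae_restrict_mem measurableSet_Ioi] with x hx
    have hx : 0 < x := hx
    have := hf x
    simp only [Pi.zero_apply]
    positivity
  have hB' : ENNReal.ofReal B = ∑' n : ℕ, ENNReal.ofReal (((n : ℝ) + 1) ^ (q * (1 - σ) - 1) * a (n + 1) ^ q) := by
    apply ENNReal.ofReal_tsum_of_nonneg _ hBs
    intro n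
    have := ha (n+1)
    positivity
  let F : ℕ → ℝ → ENNReal := fun n x => ENNReal.ofReal (Hk α ρ γ (x * (n+1)) ^ (1/p) * x ^ ((1-σ)/q) *
    ((n:ℝ)+1) ^ (-((1-σ)/p)) * f x)
  let G : ℕ → ℝ → ENNReal := fun n x => ENNReal.ofReal (Hk α ρ γ (x * (n+1)) ^ (1/q) * x ^ (-((1-σ)/q)) *
    ((n:ℝ)+1) ^ ((1-σ)/p) * a (n+1))
  have hHol := holder_sum hpq F G (volume.restrict (Ioi 0))
    (fun n => by
      simp only [F]
      refine ENNReal.measurable_ofReal.comp_aemeasurable (AEMeasurable.mul ?_ hfm)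
      fun_prop)
    (fun n => by simp only [G]; fun_prop)
  have hT : ∑' n, ∫⁻ x in Ioi (0:ℝ), F n x * G n x = 
      ∑' n : ℕ, ∫⁻ x in Ioi (0 : ℝ), ENNReal.ofReal (Hk α ρ γ (x * ((n : ℝ) + 1)) * (a (n + 1) * f x)) := by
    congr! 2 with n
    apply setLIntegral_congr_fun measurableSet_Ioi
    intro x hx
    have hx : 0 < x := hx
    have hf := hf x
    have hH := Hk_pos (α := α) (γ := γ) hρ (by positivity : 0 < x * ((n:ℝ)+1))
    simp only [F, G]
    rw [← ENNReal.ofReal_mul (by positivity)]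
    congr 1
    have e1 : Hk α ρ γ (x * ((n:ℝ)+1)) ^ (1/p) * Hk α ρ γ (x * ((n:ℝ)+1)) ^ (1/q) = Hk α ρ γ (x * ((n:ℝ)+1)) := by
      rw [← Real.rpow_add hH, one_div, one_div, hpq.inv_add_inv_eq_one, Real.rpow_one]
    have e2 : x ^ ((1-σ)/q) * x ^ (-((1-σ)/q)) = 1 := by
      rw [← Real.rpow_add hx, add_neg_cancel, Real.rpow_zero]
    have e3 : ((n:ℝ)+1) ^ (-((1-σ)/p)) * ((n:ℝ)+1) ^ ((1-σ)/p) = 1 := by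
      rw [← Real.rpow_add (by positivity), neg_add_cancel, Real.rpow_zero]
    rw [show ∀ a b c d e f g h : ℝ, a * b * c * d * (e * f * g * h) = (a * e) * (b * f) * (c * g) * (h * d) by
      intros; ring, e1, e2, e3]
    ring
  have hFp : ∑' n, ∫⁻ x in Ioi (0:ℝ), F n x ^ p < ENNReal.ofReal (k * A) := by
    have e : ∑' n, ∫⁻ x in Ioi (0:ℝ), F n x ^ p = ∑' n : ℕ, ∫⁻ x in Ioi (0:ℝ),
        ENNReal.ofReal (((n:ℝ)+1) ^ (σ - 1) * Hk α ρ γ (x * (n+1))) *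
          ENNReal.ofReal (x ^ σ * (x ^ (p * (1 - σ) - 1) * f x ^ p)) := by
      congr! 2 with n
      apply setLIntegral_congr_fun measurableSet_Ioi
      intro x hx
      have hx : 0 < x := hx
      have hf := hf x
      have hH := Hk_pos (α := α) (γ := γ) hρ (by positivity : 0 < x * ((n:ℝ)+1))
      simp only [F]
      rw [← ENNReal.ofReal_mul (by positivity), ENNReal.ofReal_rpow_of_nonneg (by positivity) hp.le]
      congr 1
      rw [Real.mul_rpow (by positivity) hf, Real.mul_rpow (by positivity) (by positivity),
        Real.mul_rpow (by positivity) (by positivity), ← Real.rpow_mul hH.le, ← Real.rpow_mul hx.le,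
        ← Real.rpow_mul (by positivity), one_div_mul_cancel hp.ne', Real.rpow_one, ← mul_assoc (x ^ σ),
        ← Real.rpow_add hx]
      have e1 : (1 - σ)/q * p = σ + (p * (1-σ) - 1) := by
        have := hpq.div_conj_eq_sub_one
        rw [show (1 - σ)/q * p = (1-σ) * (p / q) by ring, this]; ring
      have e2 : -((1-σ)/p) * p = σ - 1 := by field_simp; ring
      rw [e1, e2]
      ring
    rw [e, ← lintegral_tsum]
    · have hfin : ENNReal.ofReal (k * A) = ∫⁻ x in Ioi (0:ℝ), ENNReal.ofReal (x ^ (-σ) * k) * 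
          ENNReal.ofReal (x ^ σ * (x ^ (p * (1 - σ) - 1) * f x ^ p)) := by
        rw [ENNReal.ofReal_mul hk.le, hA', ← lintegral_const_mul' _ _ ENNReal.ofReal_ne_top]
        apply setLIntegral_congr_fun measurableSet_Ioi
        intro x hx
        have hx : 0 < x := hx
        simp only
        rw [← ENNReal.ofReal_mul (by positivity), ← ENNReal.ofReal_mul (by positivity)]
        congr 1
        have : x ^ (-σ) * x ^ σ = 1 := by rw [← Real.rpow_add hx]; simp
        linear_combination (-k * (x ^ (p * (1 - σ) - 1) * f x ^ p)) * this
      have hle : ∀ᵐ x ∂(volume.restrict (Ioi (0:ℝ))), 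
          ∑' n : ℕ, ENNReal.ofReal (((n:ℝ)+1) ^ (σ - 1) * Hk α ρ γ (x * (n+1))) *
            ENNReal.ofReal (x ^ σ * (x ^ (p * (1 - σ) - 1) * f x ^ p)) ≤ ENNReal.ofReal (x ^ (-σ) * k) * 
          ENNReal.ofReal (x ^ σ * (x ^ (p * (1 - σ) - 1) * f x ^ p)) := by
        filter_upwards [ae_restrict_mem measurableSet_Ioi] with x hx
        rw [ENNReal.tsum_mul_right]
        gcongr
        exact (sum_lt hρ hα hγ hσ hI hx).le
      rw [hfin]
      apply lintegral_strict_mono_of_ae_le_of_frequently_ae_lt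
      · refine AEMeasurable.mul (by fun_prop) (ENNReal.measurable_ofReal.comp_aemeasurable
          (AEMeasurable.mul (by fun_prop) hAi.aestronglyMeasurable.aemeasurable))
      · refine ne_top_of_le_ne_top ?_ (lintegral_mono_ae hle)
        rw [← hfin]; exact ENNReal.ofReal_ne_top
      · exact hle
      · intro hcon
        have : A = 0 := by
          rw [hAdef]
          apply integral_eq_zero_of_ae
          filter_upwards [hcon, ae_restrict_mem measurableSet_Ioi] with x hx hx0
          have hx0 : 0 < x := hx0
          have hf := hf x
          by_contra hne
          have hpos : 0 < x ^ (p * (1 - σ) - 1) * f x ^ p := 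
            lt_of_le_of_ne (by positivity) (fun h => hne h.symm)
          apply hx
          rw [ENNReal.tsum_mul_right]
          apply ne_of_lt
          refine ENNReal.mul_lt_mul_left ?_ ENNReal.ofReal_ne_top (sum_lt hρ hα hγ hσ hI hx0)
          rw [← pos_iff_ne_zero, ENNReal.ofReal_pos]
          positivity
        exact hA.ne' this
    · intro n
      refine AEMeasurable.mul (by fun_prop) (ENNReal.measurable_ofReal.comp_aemeasurable
          (AEMeasurable.mul (by fun_prop) hAi.aestronglyMeasurable.aemeasurable))
  have hGq : ∑' n, ∫⁻ x in Ioi (0:ℝ), G n x ^ q = ENNReal.ofReal (k * B) := by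
    rw [ENNReal.ofReal_mul hk.le, hB', ← ENNReal.tsum_mul_left]
    congr! 2 with n
    have e : ∫⁻ x in Ioi (0:ℝ), G n x ^ q = ∫⁻ x in Ioi (0:ℝ), 
        ENNReal.ofReal (x ^ (σ - 1) * Hk α ρ γ ((n+1) * x)) *
          ENNReal.ofReal (((n:ℝ)+1) ^ σ * (((n:ℝ)+1) ^ (q * (1 - σ) - 1) * a (n+1) ^ q)) := by
      apply setLIntegral_congr_fun measurableSet_Ioi
      intro x hx
      have hx : 0 < x := hx
      have hf := ha (n+1)
      have hH := Hk_pos (α := α) (γ := γ) hρ (by positivity : 0 < x * ((n:ℝ)+1))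
      simp only [G]
      rw [mul_comm _ x, ← ENNReal.ofReal_mul (by positivity), ENNReal.ofReal_rpow_of_nonneg (by positivity) hq.le]
      congr 1
      have hn : 0 < (n:ℝ)+1 := by positivity
      rw [Real.mul_rpow (by positivity) hf, Real.mul_rpow (by positivity) (by positivity),
        Real.mul_rpow (by positivity) (by positivity), ← Real.rpow_mul hH.le, ← Real.rpow_mul hx.le,
        ← Real.rpow_mul (by positivity), one_div_mul_cancel hq.ne', Real.rpow_one, ← mul_assoc (((n:ℝ)+1) ^ σ),
        ← Real.rpow_add hn]
      have e1 : (1 - σ)/p * q = σ + (q * (1-σ) - 1) := by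
        have := hpq.symm.div_conj_eq_sub_one
        rw [show (1 - σ)/p * q = (1-σ) * (q / p) by ring, this]; ring
      have e2 : -((1-σ)/q) * q = σ - 1 := by field_simp; ring
      rw [e1, e2]
      ring
    have hn : 0 < (n:ℝ)+1 := by positivity
    have ha := ha (n+1)
    rw [e, lintegral_mul_const' _ _ ENNReal.ofReal_ne_top, Hk_lint_scale hI hn,
      ← ENNReal.ofReal_mul (by positivity), ← ENNReal.ofReal_mul (by positivity)]
    congr 1
    have : ((n:ℝ)+1) ^ (-σ) * ((n:ℝ)+1) ^ σ = 1 := by rw [← Real.rpow_add hn]; simp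
    linear_combination (k * (((n:ℝ)+1) ^ (q * (1 - σ) - 1) * a (n+1) ^ q)) * this
  rw [hT] at hHol
  have hlt : ∑' n : ℕ, ∫⁻ x in Ioi (0 : ℝ), ENNReal.ofReal (Hk α ρ γ (x * ((n : ℝ) + 1)) * (a (n + 1) * f x)) <
      ENNReal.ofReal (k * (A ^ (1/p) * B ^ (1/q))) := by
    refine lt_of_le_of_lt hHol ?_
    have e : k * (A ^ (1/p) * B ^ (1/q)) = (k * A) ^ (1/p) * (k * B) ^ (1/q) := by
      rw [Real.mul_rpow hk.le hA.le, Real.mul_rpow hk.le hB.le]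
      have : k ^ (1/p) * k ^ (1/q) = k := by
        rw [← Real.rpow_add hk, one_div, one_div, hpq.inv_add_inv_eq_one, Real.rpow_one]
      linear_combination (-(A ^ (1/p) * B ^ (1/q))) * this
    rw [e, ENNReal.ofReal_mul (by positivity), hGq, ← ENNReal.ofReal_rpow_of_pos (by positivity),
      ← ENNReal.ofReal_rpow_of_pos (by positivity)]
    refine ENNReal.mul_lt_mul_left ?_ (by simp [hq.le]) (ENNReal.rpow_lt_rpow hFp (by positivity))
    have : 0 < ENNReal.ofReal (k * B) := ENNReal.ofReal_pos.2 (by positivity)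
    exact (ENNReal.rpow_pos this ENNReal.ofReal_ne_top).ne'
  have hne := hlt.ne_top
  have hEq : (∑' n : ℕ, ∫ x in Ioi (0 : ℝ), Hk α ρ γ (x * ((n : ℝ) + 1)) * (a (n + 1) * f x)) =
     (∑' n : ℕ, ∫⁻ x in Ioi (0 : ℝ), ENNReal.ofReal (Hk α ρ γ (x * ((n : ℝ) + 1)) * (a (n + 1) * f x))).toReal := by
    rw [ENNReal.tsum_toReal_eq (fun n => ENNReal.ne_top_of_tsum_ne_top hne n)]
    congr! 2 with n
    apply integral_eq_lintegral_of_nonneg_ae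
    · filter_upwards [ae_restrict_mem measurableSet_Ioi] with x hx
      have hx : 0 < x := hx
      have hf := hf x
      have ha := ha (n+1)
      have hH := Hk_pos (α := α) (γ := γ) hρ (by positivity : 0 < x * ((n:ℝ)+1))
      simp only [Pi.zero_apply]
      positivity
    · apply AEMeasurable.aestronglyMeasurable
      exact AEMeasurable.mul (by fun_prop) (hfm.const_mul _)
  rw [hEq]
  exact ⟨ENNReal.ofReal_toReal hne, ENNReal.toReal_lt_of_lt_ofReal hlt⟩

noncomputable def ftest (s M x : ℝ) : ℝ := (Ioc 0 M).indicator (fun x => x ^ s) x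

lemma ftest_nonneg (s M x : ℝ) : 0 ≤ ftest s M x := by
  unfold ftest
  apply indicator_nonneg
  intro x hx
  exact Real.rpow_nonneg hx.1.le _

lemma part2_step {α ρ γ σ p q k K ε M : ℝ} (hρ : 0 < ρ) (hα : 0 < α + ρ) (hγ : 0 < γ) (hσ : σ ≤ 1)
    (hpq : p.HolderConjugate q)
    (hI : ∫⁻ u in Ioi (0:ℝ), ENNReal.ofReal (u ^ (σ - 1) * Hk α ρ γ u) = ENNReal.ofReal k)
    (hK : 0 < K) (hε : 0 < ε) (hM : 0 < M)
    (h : ∀ (f : ℝ → ℝ) (a : ℕ → ℝ), (∀ x, 0 ≤ f x) → (∀ n, 0 ≤ a n) →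
        (0 < ∫ x in Set.Ioi (0 : ℝ), x ^ (p * (1 - σ) - 1) * f x ^ p) →
        MeasureTheory.IntegrableOn (fun x => x ^ (p * (1 - σ) - 1) * f x ^ p) (Set.Ioi 0) →
        (0 < ∑' n : ℕ, ((n : ℝ) + 1) ^ (q * (1 - σ) - 1) * a (n + 1) ^ q) →
        (Summable fun n : ℕ => ((n : ℝ) + 1) ^ (q * (1 - σ) - 1) * a (n + 1) ^ q) →
        (∑' n : ℕ, ∫ x in Set.Ioi (0 : ℝ), Hk α ρ γ (x * ((n : ℝ) + 1)) * (a (n + 1) * f x)) <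
          K * ((∫ x in Set.Ioi (0 : ℝ), x ^ (p * (1 - σ) - 1) * f x ^ p) ^ (1 / p) *
            (∑' n : ℕ, ((n : ℝ) + 1) ^ (q * (1 - σ) - 1) * a (n + 1) ^ q) ^ (1 / q))) :
    ENNReal.ofReal ((ε * ∑' n : ℕ, ((n:ℝ)+1) ^ (-1 - ε)) ^ (1/p) * M ^ (-(ε / p))) *
      ∫⁻ u in Ioi (0:ℝ), ENNReal.ofReal (Hk α ρ γ u * ftest (σ - 1 + ε / p) M u) ≤ ENNReal.ofReal K := by
  have hp := hpq.pos
  have hq := hpq.symm.pos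
  have hqp : 1 / p + 1 / q = 1 := by rw [one_div, one_div, hpq.inv_add_inv_eq_one]
  set f := ftest (σ - 1 + ε / p) M with hfdef
  set S := ∑' n : ℕ, ((n:ℝ)+1) ^ (-1 - ε) with hS
  let a : ℕ → ℝ := fun n => (n:ℝ) ^ (σ - 1 - ε / q)
  have hf : ∀ x, 0 ≤ f x := ftest_nonneg _ _
  have ha : ∀ n, 0 ≤ a n := fun n => by positivity
  have hSs : Summable fun n : ℕ => ((n:ℝ)+1) ^ (-1 - ε) := by
    have := (summable_nat_add_iff 1).2 (Real.summable_nat_rpow (p := -1 - ε).2 (by linarith))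
    simpa using this
  have hSpos : 0 < S := hSs.tsum_pos (fun n => by positivity) 0 (by positivity)
  have haq : ∀ n : ℕ, ((n : ℝ) + 1) ^ (q * (1 - σ) - 1) * a (n + 1) ^ q = ((n:ℝ)+1) ^ (-1 - ε) := by
    intro n
    have hn : 0 < (n:ℝ)+1 := by positivity
    simp only [a]
    push_cast
    rw [← Real.rpow_mul hn.le, ← Real.rpow_add hn]
    congr 1
    field_simp
    ring
  have hfp : EqOn (fun x => x ^ (p * (1 - σ) - 1) * f x ^ p) ((Ioc 0 M).indicator (fun x => x ^ (ε - 1))) (Ioi 0) := by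
    intro x hx
    have hx : 0 < x := hx
    simp only [hfdef, ftest, indicator]
    split_ifs with hxM
    · rw [← Real.rpow_mul hx.le, ← Real.rpow_add hx]
      congr 1
      field_simp
      ring
    · rw [Real.zero_rpow hp.ne', mul_zero]
  have hint : IntegrableOn (fun x : ℝ => x ^ (ε - 1)) (Ioc 0 M) := by
    have := intervalIntegral.intervalIntegrable_rpow' (a := 0) (b := M) (r := ε - 1) (by linarith)
    rwa [intervalIntegrable_iff_integrableOn_Ioc_of_le hM.le] at this
  have hAi : IntegrableOn (fun x => x ^ (p * (1 - σ) - 1) * f x ^ p) (Ioi 0) := by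
    rw [integrableOn_congr_fun hfp measurableSet_Ioi]
    exact ((integrable_indicator_iff measurableSet_Ioc).2 hint).integrableOn
  have hA : ∫ x in Ioi (0:ℝ), x ^ (p * (1 - σ) - 1) * f x ^ p = M ^ ε / ε := by
    rw [setIntegral_congr_fun measurableSet_Ioi hfp, setIntegral_indicator measurableSet_Ioc,
      inter_eq_right.2 Ioc_subset_Ioi_self, ← intervalIntegral.integral_of_le hM.le,
      integral_rpow (Or.inl (by linarith))]
    simp [Real.zero_rpow hε.ne']
  have hApos : 0 < ∫ x in Ioi (0:ℝ), x ^ (p * (1 - σ) - 1) * f x ^ p := by rw [hA]; positivity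
  have hBs : Summable fun n : ℕ => ((n : ℝ) + 1) ^ (q * (1 - σ) - 1) * a (n + 1) ^ q := by
    simpa only [haq] using hSs
  have hB : ∑' n : ℕ, ((n : ℝ) + 1) ^ (q * (1 - σ) - 1) * a (n + 1) ^ q = S := by simp only [haq, hS]
  have hBpos : 0 < ∑' n : ℕ, ((n : ℝ) + 1) ^ (q * (1 - σ) - 1) * a (n + 1) ^ q := by rwa [hB]
  have h1 := h f a hf ha hApos hAi hBpos hBs
  have h2 := (part1 hρ hα hγ hσ hpq hI f a hf ha hApos hAi hBpos hBs).1
  rw [hA, hB] at h1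
  have h3 := ENNReal.ofReal_le_ofReal h1.le
  rw [h2] at h3
  set J := ∫⁻ u in Ioi (0:ℝ), ENNReal.ofReal (Hk α ρ γ u * f u) with hJ
  have h4 : ENNReal.ofReal S * J ≤ ∑' n : ℕ, ∫⁻ x in Ioi (0 : ℝ),
      ENNReal.ofReal (Hk α ρ γ (x * ((n : ℝ) + 1)) * (a (n + 1) * f x)) := by
    rw [hS, ENNReal.ofReal_tsum_of_nonneg (fun n => by positivity) hSs, ← ENNReal.tsum_mul_right]
    apply ENNReal.tsum_le_tsum
    intro n
    have hn : 0 < (n:ℝ)+1 := by positivity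
    rw [hJ, lint_scale hn, ← mul_assoc, ← ENNReal.ofReal_mul (by positivity),
      ← lintegral_const_mul' _ _ ENNReal.ofReal_ne_top]
    apply setLIntegral_mono' measurableSet_Ioi
    intro x hx
    have hx : 0 < x := hx
    have hH := Hk_pos (α := α) (γ := γ) hρ (by positivity : 0 < x * ((n:ℝ)+1))
    rw [← ENNReal.ofReal_mul (by positivity)]
    apply ENNReal.ofReal_le_ofReal
    rw [mul_comm _ x]
    have hff : ((n:ℝ)+1) ^ (-1-ε) * ((n:ℝ)+1) * f (x * (n+1)) ≤ a (n+1) * f x := by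
      simp only [hfdef, ftest, indicator]
      by_cases hxM : x * (n+1) ∈ Ioc 0 M
      · have hxM' : x ∈ Ioc 0 M := ⟨hx, le_trans (by nlinarith [mul_nonneg hx.le (Nat.cast_nonneg (α := ℝ) n)]) hxM.2⟩
        rw [if_pos hxM, if_pos hxM', Real.mul_rpow hx.le hn.le]
        apply le_of_eq
        simp only [a]
        push_cast
        have : ((n:ℝ)+1) ^ (-1-ε) * ((n:ℝ)+1) * ((n:ℝ)+1) ^ (σ - 1 + ε/p) = ((n:ℝ)+1) ^ (σ - 1 - ε/q) := by
          nth_rewrite 2 [← Real.rpow_one ((n:ℝ)+1)]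
          rw [← Real.rpow_add hn, ← Real.rpow_add hn]
          congr 1
          linear_combination ε * hqp
        rw [← this]; ring
      · rw [if_neg hxM, mul_zero]
        refine mul_nonneg (ha _) ?_
        split_ifs <;> positivity
    calc _ = Hk α ρ γ (x * (n+1)) * (((n:ℝ)+1) ^ (-1-ε) * ((n:ℝ)+1) * f (x * (n+1))) := by ring
      _ ≤ _ := by gcongr
  have h5 := h4.trans h3
  have h6 := mul_le_mul_right h5 (ENNReal.ofReal (ε ^ (1/p) * M ^ (-(ε/p)) * S ^ (-(1/q))))
  rw [← mul_assoc, ← ENNReal.ofReal_mul (by positivity), ← ENNReal.ofReal_mul (by positivity)] at h6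
  have e1 : ε ^ (1/p) * M ^ (-(ε/p)) * S ^ (-(1/q)) * S = (ε * S) ^ (1/p) * M ^ (-(ε / p)) := by
    have : S ^ (-(1/q)) * S = S ^ (1/p) := by
      nth_rewrite 2 [← Real.rpow_one S]
      rw [← Real.rpow_add hSpos]
      congr 1; linarith
    rw [Real.mul_rpow hε.le hSpos.le, ← this]; ring
  have e2 : ε ^ (1/p) * M ^ (-(ε/p)) * S ^ (-(1/q)) * (K * ((M ^ ε / ε) ^ (1 / p) * S ^ (1 / q))) = K := by
    rw [Real.div_rpow (by positivity) hε.le, ← Real.rpow_mul hM.le, mul_one_div, Real.rpow_neg hM.le,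
      Real.rpow_neg hSpos.le]
    have : 0 < ε ^ (1/p) := by positivity
    have : 0 < M ^ (ε/p) := by positivity
    have : 0 < S ^ (1/q) := by positivity
    field_simp
  rwa [e1, e2] at h6

lemma part2 {α ρ γ σ p q k K : ℝ} (hρ : 0 < ρ) (hα : 0 < α + ρ) (hγ : 0 < γ) (hσ : σ ≤ 1)
    (hpq : p.HolderConjugate q)
    (hI : ∫⁻ u in Ioi (0:ℝ), ENNReal.ofReal (u ^ (σ - 1) * Hk α ρ γ u) = ENNReal.ofReal k)
    (hK : 0 < K)
    (h : ∀ (f : ℝ → ℝ) (a : ℕ → ℝ), (∀ x, 0 ≤ f x) → (∀ n, 0 ≤ a n) →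
        (0 < ∫ x in Set.Ioi (0 : ℝ), x ^ (p * (1 - σ) - 1) * f x ^ p) →
        MeasureTheory.IntegrableOn (fun x => x ^ (p * (1 - σ) - 1) * f x ^ p) (Set.Ioi 0) →
        (0 < ∑' n : ℕ, ((n : ℝ) + 1) ^ (q * (1 - σ) - 1) * a (n + 1) ^ q) →
        (Summable fun n : ℕ => ((n : ℝ) + 1) ^ (q * (1 - σ) - 1) * a (n + 1) ^ q) →
        (∑' n : ℕ, ∫ x in Set.Ioi (0 : ℝ), Hk α ρ γ (x * ((n : ℝ) + 1)) * (a (n + 1) * f x)) <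
          K * ((∫ x in Set.Ioi (0 : ℝ), x ^ (p * (1 - σ) - 1) * f x ^ p) ^ (1 / p) *
            (∑' n : ℕ, ((n : ℝ) + 1) ^ (q * (1 - σ) - 1) * a (n + 1) ^ q) ^ (1 / q))) :
    k ≤ K := by
  have hp := hpq.pos
  let M : ℕ → ℝ := fun m => (m:ℝ) + 1
  let ε : ℕ → ℝ := fun m => 1 / M m
  have hM : ∀ m, 0 < M m := fun m => by positivity
  have hε : ∀ m, 0 < ε m := fun m => by have := hM m; positivity
  have hMt : Tendsto M atTop atTop := tendsto_atTop_add_const_right _ _ tendsto_natCast_atTop_atTop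
  have hεt : Tendsto ε atTop (𝓝 0) := by
    refine hMt.inv_tendsto_atTop.congr fun m => ?_
    simp [ε]
  let c : ℕ → ℝ := fun m => (ε m * ∑' n : ℕ, ((n:ℝ)+1) ^ (-1 - ε m)) ^ (1/p) * M m ^ (-(ε m / p))
  have hc : Tendsto c atTop (𝓝 1) := by
    have t1 : Tendsto (fun m => ε m * ∑' n : ℕ, ((n:ℝ)+1) ^ (-1 - ε m)) atTop (𝓝 1) := by
      have hs : Tendsto (fun m => 1 + ε m) atTop (𝓝[>] 1) := by
        apply tendsto_nhdsWithin_of_tendsto_nhds_of_eventually_within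
        · simpa using hεt.const_add 1
        · exact Eventually.of_forall fun m => by simpa using hε m
      refine (tendsto_sub_mul_tsum_nat_rpow.comp hs).congr fun m => ?_
      simp only [Function.comp]
      have hsum : Summable fun n : ℕ => 1 / (n:ℝ) ^ (1 + ε m) := by
        rw [Real.summable_one_div_nat_rpow]; linarith [hε m]
      have := hε m
      rw [hsum.tsum_eq_zero_add]
      simp only [Nat.cast_zero]
      rw [Real.zero_rpow (by positivity)]
      simp only [div_zero, zero_add, add_sub_cancel_left]
      congr 2
      funext n
      rw [show -1 - ε m = -(1 + ε m) by ring, Real.rpow_neg (by positivity)]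
      simp
    have t2 : Tendsto (fun m => M m ^ (-(ε m / p))) atTop (𝓝 1) := by
      have := (tendsto_rpow_div.comp hMt).rpow_const (p := -(1/p)) (Or.inl one_ne_zero)
      rw [Real.one_rpow] at this
      refine this.congr fun m => ?_
      simp only [Function.comp]
      rw [← Real.rpow_mul (hM m).le]
      congr 1
      simp only [ε]; ring
    have := (t1.rpow_const (p := 1/p) (Or.inl one_ne_zero)).mul t2
    rw [Real.one_rpow, one_mul] at this
    exact this
  let g : ℕ → ℝ → ENNReal := fun m u => ENNReal.ofReal (c m) *
    ENNReal.ofReal (Hk α ρ γ u * ftest (σ - 1 + ε m / p) (M m) u)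
  have hgm : ∀ m, Measurable (g m) := by
    intro m
    have h1 := Hk_meas α ρ γ
    have h2 : Measurable (ftest (σ - 1 + ε m / p) (M m)) := by
      have : Measurable fun x : ℝ => x ^ (σ - 1 + ε m / p) := by fun_prop
      exact this.indicator measurableSet_Ioc
    simp only [g]
    fun_prop
  have hle : ∀ m, ∫⁻ u in Ioi (0:ℝ), g m u ≤ ENNReal.ofReal K := by
    intro m
    simp only [g]
    rw [lintegral_const_mul' _ _ ENNReal.ofReal_ne_top]
    exact part2_step hρ hα hγ hσ hpq hI hK (hε m) (hM m) h
  have hlim : ∀ u ∈ Ioi (0:ℝ), ENNReal.ofReal (u ^ (σ - 1) * Hk α ρ γ u) = liminf (fun m => g m u) atTop := by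
    intro u hu
    have hu : 0 < u := hu
    symm
    apply Tendsto.liminf_eq
    have t : Tendsto (fun m => ftest (σ - 1 + ε m / p) (M m) u) atTop (𝓝 (u ^ (σ - 1))) := by
      have t1 : Tendsto (fun m => u ^ (σ - 1 + ε m / p)) atTop (𝓝 (u ^ (σ - 1))) := by
        have : Tendsto (fun m => σ - 1 + ε m / p) atTop (𝓝 (σ - 1)) := by
          simpa using (hεt.div_const p).const_add (σ - 1)
        exact (tendsto_const_nhds (x := u)).rpow this (Or.inl hu.ne')
      refine t1.congr' ?_
      filter_upwards [hMt.eventually_ge_atTop u] with m hm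
      simp only [ftest]
      rw [indicator_of_mem (show u ∈ Ioc 0 (M m) from ⟨hu, hm⟩)]
    have t2 := ENNReal.Tendsto.mul (ENNReal.tendsto_ofReal hc) (Or.inr ENNReal.ofReal_ne_top)
      (ENNReal.tendsto_ofReal (t.const_mul (Hk α ρ γ u))) (Or.inr (by simp))
    simpa [g, mul_comm] using t2
  have : ENNReal.ofReal k ≤ ENNReal.ofReal K := by
    rw [← hI, setLIntegral_congr_fun measurableSet_Ioi hlim]
    refine (lintegral_liminf_le hgm).trans ?_
    exact liminf_le_of_le (by isBoundedDefault) (fun b hb => by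
      obtain ⟨m, hm⟩ := hb.exists
      exact hm.trans (hle m))
  exact (ENNReal.ofReal_le_ofReal_iff hK.le).1 this

theorem stmt17 (α ρ γ σ p q : ℝ)
    (hp : 1 < p) (hpq : 1 / p + 1 / q = 1)
    (hρ : ρ > max 0 (-α)) (hγ : 0 < γ) (hγσ : γ < σ) (hσ : σ ≤ 1)
    (k : ℝ)
    (hk : k = 2 * Real.Gamma (σ / γ) / (γ * (2 * ρ) ^ (σ / γ)) *
        hurwitzZetaReal (σ / γ) ((α + ρ) / (2 * ρ))) :
    (∀ (f : ℝ → ℝ) (a : ℕ → ℝ), (∀ x, 0 ≤ f x) → (∀ n, 0 ≤ a n) →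
      (0 < ∫ x in Set.Ioi (0 : ℝ), x ^ (p * (1 - σ) - 1) * f x ^ p) →
      MeasureTheory.IntegrableOn (fun x => x ^ (p * (1 - σ) - 1) * f x ^ p) (Set.Ioi 0) →
      (0 < ∑' n : ℕ, ((n : ℝ) + 1) ^ (q * (1 - σ) - 1) * a (n + 1) ^ q) →
      (Summable fun n : ℕ => ((n : ℝ) + 1) ^ (q * (1 - σ) - 1) * a (n + 1) ^ q) →
      (∑' n : ℕ, ∫ x in Set.Ioi (0 : ℝ),
          csch (ρ * (x * ((n : ℝ) + 1)) ^ γ) / Real.exp (α * (x * ((n : ℝ) + 1)) ^ γ) *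
            (a (n + 1) * f x)) <
        k * ((∫ x in Set.Ioi (0 : ℝ), x ^ (p * (1 - σ) - 1) * f x ^ p) ^ (1 / p) *
          (∑' n : ℕ, ((n : ℝ) + 1) ^ (q * (1 - σ) - 1) * a (n + 1) ^ q) ^ (1 / q))) ∧
    (∀ K : ℝ, 0 < K →
      (∀ (f : ℝ → ℝ) (a : ℕ → ℝ), (∀ x, 0 ≤ f x) → (∀ n, 0 ≤ a n) →
        (0 < ∫ x in Set.Ioi (0 : ℝ), x ^ (p * (1 - σ) - 1) * f x ^ p) →
        MeasureTheory.IntegrableOn (fun x => x ^ (p * (1 - σ) - 1) * f x ^ p) (Set.Ioi 0) →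
        (0 < ∑' n : ℕ, ((n : ℝ) + 1) ^ (q * (1 - σ) - 1) * a (n + 1) ^ q) →
        (Summable fun n : ℕ => ((n : ℝ) + 1) ^ (q * (1 - σ) - 1) * a (n + 1) ^ q) →
        (∑' n : ℕ, ∫ x in Set.Ioi (0 : ℝ),
            csch (ρ * (x * ((n : ℝ) + 1)) ^ γ) / Real.exp (α * (x * ((n : ℝ) + 1)) ^ γ) *
              (a (n + 1) * f x)) <
          K * ((∫ x in Set.Ioi (0 : ℝ), x ^ (p * (1 - σ) - 1) * f x ^ p) ^ (1 / p) *
            (∑' n : ℕ, ((n : ℝ) + 1) ^ (q * (1 - σ) - 1) * a (n + 1) ^ q) ^ (1 / q))) →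
      k ≤ K) := by

  have hρ0 : 0 < ρ := lt_of_le_of_lt (le_max_left _ _) hρ
  have hα : 0 < α + ρ := by have := lt_of_le_of_lt (le_max_right _ _) hρ; linarith
  have hq : p.HolderConjugate q := by
    rw [Real.holderConjugate_iff]
    exact ⟨hp, by simpa using hpq⟩
  have hI := Hk_lint hρ0 hα hγ hγσ
  rw [← hk] at hI
  refine ⟨fun f a hf ha hA hAi hB hBs => (part1 hρ0 hα hγ hσ hq hI f a hf ha hA hAi hB hBs).2, 
    fun K hK h => part2 hρ0 hα hγ hσ hq hI hK h⟩
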